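/- Let g(z₁,…,zₙ) = Σ_{S ⊆ [n]} c_S Π_{i∈S} z_i be a multiaffine polynomial with complex coefficients that is Γ_α-stable for some α ∈ (0,2]. Then its homogenization g^hom(z₁,…,zₙ,w₁,…,wₙ) = Σ_{S ⊆ [n]} c_S · Π_{i∈S} z_i · Π_{i∉S} w_i is a multiaffine polynomial, homogeneous of degree n, and Γ_{α/2}-stable. -/

import Mathlib

open MvPolynomial Finset

/-- `z` lies in the open sector `Γ_α` of aperture `απ` centered on the positive real axis. -/
def inSector (α : ℝ) (z : ℂ) : Prop := z ≠ 0 ∧ |z.arg| < α * Real.pi / 2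

/-- A complex polynomial is `Γ_α`-stable if it does not vanish when all variables are
assigned values in `Γ_α`. -/
def SectorStable {σ : Type*} (α : ℝ) (g : MvPolynomial σ ℂ) : Prop :=
  ∀ z : σ → ℂ, (∀ i, inSector α (z i)) → MvPolynomial.eval z g ≠ 0

/-- The homogenization `g^hom = Σ_S c_S (Π_{i∈S} z_i)(Π_{i∉S} w_i)` of the multiaffine
polynomial `g = Σ_S c_S z^S`, in `2n` variables `Fin n ⊕ Fin n`. -/
noncomputable def homogenization (n : ℕ) (c : Finset (Fin n) → ℂ) :
    MvPolynomial (Fin n ⊕ Fin n) ℂ :=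
  ∑ S : Finset (Fin n), MvPolynomial.C (c S) *
    ((∏ i ∈ S, MvPolynomial.X (Sum.inl i)) * ∏ i ∈ Sᶜ, MvPolynomial.X (Sum.inr i))

/-!
If no `w i` vanishes, then `g^hom(z, w) = (∏ i, w i) * g(z / w)`, so it suffices that the quotients
`z i / w i` stay in `Γ_α`. They do for `z i, w i ∈ Γ_{α/2}`: by the triangle inequality for angles,
`|arg (z / w)| ≤ |arg z| + |arg w|`.
-/

section SquarefreeMonomial

variable {σ R : Type*} [CommSemiring R]

lemma degreeOf_prod_X_le_one (v : σ) (T : Finset σ) :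
    degreeOf v (∏ u ∈ T, X u : MvPolynomial σ R) ≤ 1 := by
  classical
  cases subsingleton_or_nontrivial R
  · rw [Subsingleton.elim (∏ u ∈ T, X u) 0, degreeOf_zero]
    exact zero_le_one
  · calc degreeOf v (∏ u ∈ T, X u : MvPolynomial σ R)
        ≤ ∑ u ∈ T, degreeOf v (X u : MvPolynomial σ R) := degreeOf_prod_le v T _
      _ = if v ∈ T then 1 else 0 := by simp only [degreeOf_X, sum_ite_eq]
      _ ≤ 1 := by split_ifs <;> simp only [le_refl, zero_le]

lemma isHomogeneous_prod_X (T : Finset σ) :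
    (∏ u ∈ T, X u : MvPolynomial σ R).IsHomogeneous #T := by
  simpa only [sum_const, smul_eq_mul, mul_one] using
    IsHomogeneous.prod T (X : σ → MvPolynomial σ R) (fun _ => 1) fun u _ => isHomogeneous_X R u

end SquarefreeMonomial

section MultiaffineHomogenization

variable {ι : Type*} [Fintype ι] [DecidableEq ι]

/-- The homogenization `∑ S, c S * ∏ i ∈ S, z i * ∏ i ∈ Sᶜ, w i` of the multiaffine polynomial
`∑ S, c S * ∏ i ∈ S, z i`, extending `homogenization` to an arbitrary finite index type and
arbitrary coefficients. The variables `z i` and `w i` are `X (Sum.inl i)` and `X (Sum.inr i)`, and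
the squarefree monomial of `S` is written as a single product over `S.disjSum Sᶜ`. -/
noncomputable def multiaffineHomogenization {R : Type*} [CommSemiring R] (c : Finset ι → R) :
    MvPolynomial (ι ⊕ ι) R :=
  ∑ S : Finset ι, C (c S) * ∏ v ∈ S.disjSum Sᶜ, X v

lemma homogenization_eq_multiaffineHomogenization (n : ℕ) (c : Finset (Fin n) → ℂ) :
    homogenization n c = multiaffineHomogenization c := by
  simp only [homogenization, multiaffineHomogenization, prod_disjSum]

lemma degreeOf_multiaffineHomogenization_le_one {R : Type*} [CommSemiring R] (c : Finset ι → R)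
    (v : ι ⊕ ι) : degreeOf v (multiaffineHomogenization c) ≤ 1 :=
  (degreeOf_sum_le v _ _).trans <| Finset.sup_le fun _ _ =>
    (degreeOf_C_mul_le _ _ _).trans (degreeOf_prod_X_le_one v _)

lemma isHomogeneous_multiaffineHomogenization {R : Type*} [CommSemiring R] (c : Finset ι → R) :
    (multiaffineHomogenization c).IsHomogeneous (Fintype.card ι) := by
  refine IsHomogeneous.sum _ _ _ fun S _ => IsHomogeneous.C_mul ?_ _
  rw [← card_add_card_compl S, ← card_disjSum]
  exact isHomogeneous_prod_X _

lemma eval_multiaffineHomogenization {K : Type*} [Field K] (c : Finset ι → K) (p : ι ⊕ ι → K)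
    (hp : ∀ i, p (Sum.inr i) ≠ 0) :
    eval p (multiaffineHomogenization c) =
      (∏ i, p (Sum.inr i)) *
        ∑ S : Finset ι, c S * ∏ i ∈ S, p (Sum.inl i) / p (Sum.inr i) := by
  simp only [multiaffineHomogenization, map_sum, map_mul, map_prod, eval_C, eval_X, mul_sum,
    prod_disjSum]
  refine sum_congr rfl fun S _ => ?_
  have hS : ∏ i ∈ S, p (Sum.inr i) ≠ 0 := prod_ne_zero_iff.2 fun i _ => hp i
  rw [← prod_mul_prod_compl S, prod_div_distrib]
  field_simp

end MultiaffineHomogenization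

lemma abs_arg_div_le {z w : ℂ} (hz : z ≠ 0) (hw : w ≠ 0) :
    |(z / w).arg| ≤ |z.arg| + |w.arg| := by
  calc |(z / w).arg|
      = InnerProductGeometry.angle z w := (Complex.angle_eq_abs_arg hz hw).symm
    _ ≤ InnerProductGeometry.angle z 1 + InnerProductGeometry.angle 1 w :=
        InnerProductGeometry.angle_le_angle_add_angle z 1 w
    _ = |z.arg| + |w.arg| := by rw [Complex.angle_one_right hz, Complex.angle_one_left hw]

lemma inSector.div {β γ : ℝ} {z w : ℂ} (hz : inSector β z) (hw : inSector γ w) :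
    inSector (β + γ) (z / w) :=
  ⟨div_ne_zero hz.1 hw.1,
    calc |(z / w).arg| ≤ |z.arg| + |w.arg| := abs_arg_div_le hz.1 hw.1
      _ < β * Real.pi / 2 + γ * Real.pi / 2 := add_lt_add hz.2 hw.2
      _ = (β + γ) * Real.pi / 2 := by ring⟩

lemma eval_multiaffineHomogenization_ne_zero {ι : Type*} [Fintype ι] [DecidableEq ι] {β γ : ℝ}
    {c : Finset ι → ℂ}
    (hstable : ∀ z : ι → ℂ, (∀ i, inSector (β + γ) (z i)) →
      (∑ S : Finset ι, c S * ∏ i ∈ S, z i) ≠ 0)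
    {p : ι ⊕ ι → ℂ} (hz : ∀ i, inSector β (p (Sum.inl i)))
    (hw : ∀ i, inSector γ (p (Sum.inr i))) :
    eval p (multiaffineHomogenization c) ≠ 0 := by
  rw [eval_multiaffineHomogenization c p fun i => (hw i).1]
  exact mul_ne_zero (prod_ne_zero_iff.2 fun i _ => (hw i).1)
    (hstable _ fun i => (hz i).div (hw i))

theorem homogenization_sectorStable_general {ι : Type*} [Fintype ι] [DecidableEq ι] (β γ : ℝ)
    (c : Finset ι → ℂ)
    (hstable : ∀ z : ι → ℂ, (∀ i, inSector (β + γ) (z i)) →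
      (∑ S : Finset ι, c S * ∏ i ∈ S, z i) ≠ 0) :
    (∀ m ∈ (multiaffineHomogenization c).support, ∀ v, m v ≤ 1) ∧
      (multiaffineHomogenization c).IsHomogeneous (Fintype.card ι) ∧
      ∀ p : ι ⊕ ι → ℂ, (∀ i, inSector β (p (Sum.inl i))) → (∀ i, inSector γ (p (Sum.inr i))) →
        eval p (multiaffineHomogenization c) ≠ 0 :=
  ⟨fun _ hm v => degreeOf_le_iff.1 (degreeOf_multiaffineHomogenization_le_one c v) _ hm,
    isHomogeneous_multiaffineHomogenization c,
    fun _ => eval_multiaffineHomogenization_ne_zero hstable⟩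

/-- If the multiaffine polynomial `g = Σ_S c_S z^S` is `Γ_α`-stable, then its
homogenization is multiaffine, homogeneous of degree `n`, and `Γ_{α/2}`-stable. -/
theorem homogenization_sectorStable (n : ℕ) (α : ℝ) (hα0 : 0 < α) (hα2 : α ≤ 2)
    (c : Finset (Fin n) → ℂ)
    (hstable : ∀ z : Fin n → ℂ, (∀ i, inSector α (z i)) →
      (∑ S : Finset (Fin n), c S * ∏ i ∈ S, z i) ≠ 0) :
    (∀ m ∈ (homogenization n c).support, ∀ v, m v ≤ 1) ∧
      (homogenization n c).IsHomogeneous n ∧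
      SectorStable (α / 2) (homogenization n c) := by
  rw [homogenization_eq_multiaffineHomogenization]
  obtain ⟨hm, hh, hs⟩ := homogenization_sectorStable_general (α / 2) (α / 2) c (by rwa [add_halves])
  exact ⟨hm, by rwa [Fintype.card_fin] at hh, fun p hp => hs p (fun _ => hp _) fun _ => hp _⟩
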